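/- Let I ⊆ A = K[x_1,…,x_n] be a nonzero proper monomial ideal, let J be its minimal monomial reduction ideal (the ideal generated by the monomials x^a with a ∈ ext(I)), and let ℓ = c(I) + 1 where c(I) = max{dim F : F a compact face of conv(I)} and dim F is the dimension of the affine hull of F. If I^a = \overline{I^a} for all integers 1 ≤ a ≤ ℓ−1, then I^ℓ = J·I^{ℓ−1}, and I is normal, i.e. I^a = \overline{I^a} for every integer a ≥ 1. -/

import Mathlib

open MvPolynomial Pointwise

attribute [local instance] Classical.propDecidable

noncomputable section

/-- The real exponent vector of a monomial exponent `a : Fin n →₀ ℕ`. -/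
def expVec {n : ℕ} (a : Fin n →₀ ℕ) : Fin n → ℝ := fun i => (a i : ℝ)

/-- The standard inner product on `ℝ^n`. -/
def dotR {n : ℕ} (u v : Fin n → ℝ) : ℝ := ∑ i, u i * v i

/-- A monomial ideal: an ideal generated by a set of monomials. -/
def IsMonomialIdeal {K : Type*} [Field K] {n : ℕ} (I : Ideal (MvPolynomial (Fin n) K)) : Prop :=
  ∃ S : Set (Fin n →₀ ℕ), I = Ideal.span ((fun a => (monomial a (1 : K))) '' S)

/-- The Newton polyhedron of an ideal: the convex hull of the exponent vectors of the
monomials belonging to the ideal. -/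
def newtonPolyhedron {K : Type*} [Field K] {n : ℕ} (I : Ideal (MvPolynomial (Fin n) K)) :
    Set (Fin n → ℝ) :=
  convexHull ℝ {v | ∃ a : Fin n →₀ ℕ, monomial a (1 : K) ∈ I ∧ v = expVec a}

/-- The hyperplane `{v : ⟨u,v⟩ = c}` is a supporting hyperplane of `C`:
`C ⊆ {v : ⟨u,v⟩ ≥ c}` and the hyperplane meets `C`. -/
def IsSupp {n : ℕ} (C : Set (Fin n → ℝ)) (u : Fin n → ℝ) (c : ℝ) : Prop :=
  (∀ v ∈ C, c ≤ dotR u v) ∧ ∃ v ∈ C, dotR u v = c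

/-- `F` is a proper face of `C`: `F = S ∩ C` for some supporting hyperplane `S`, `F ≠ C`. -/
def IsProperFace {n : ℕ} (C F : Set (Fin n → ℝ)) : Prop :=
  ∃ u c, u ≠ 0 ∧ IsSupp C u c ∧ F = {v ∈ C | dotR u v = c} ∧ F ≠ C

/-- A compact face is a proper face that is compact. -/
def IsCompactFace {n : ℕ} (C F : Set (Fin n → ℝ)) : Prop :=
  IsProperFace C F ∧ IsCompact F

/-- A maximal compact face: a compact face maximal under inclusion. -/
def IsMaxCompactFace {n : ℕ} (C F : Set (Fin n → ℝ)) : Prop :=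
  IsCompactFace C F ∧ ∀ G, IsCompactFace C G → F ⊆ G → F = G

/-- The graded maximal ideal `(x_1, …, x_n)` of `K[x_1, …, x_n]`. -/
def maxIdeal (K : Type*) [Field K] (n : ℕ) : Ideal (MvPolynomial (Fin n) K) :=
  Ideal.span (Set.range fun i => (X i : MvPolynomial (Fin n) K))

/-- `f` is a minimal generator of the monomial ideal `L` if `f ∈ L` and `f ∉ (x_1,…,x_n)·L`. -/
def IsMinGen {K : Type*} [Field K] {n : ℕ} (L : Ideal (MvPolynomial (Fin n) K))
    (f : MvPolynomial (Fin n) K) : Prop :=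
  f ∈ L ∧ f ∉ maxIdeal K n * L

/-- `L` is a reduction ideal of `I`: `L ⊆ I` and `L·I^{m-1} = I^m` for some `m ≥ 1`. -/
def IsReduction {K : Type*} [Field K] {n : ℕ} (L I : Ideal (MvPolynomial (Fin n) K)) : Prop :=
  L ≤ I ∧ ∃ m : ℕ, 1 ≤ m ∧ L * I ^ (m - 1) = I ^ m

/-- `c(I)`: the maximum of the dimensions (of affine hulls) of the compact faces of the
Newton polyhedron of `I`. -/
def maxCompactFaceDim {K : Type*} [Field K] {n : ℕ} (I : Ideal (MvPolynomial (Fin n) K)) : ℕ :=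
  sSup {d : ℕ | ∃ F, IsCompactFace (newtonPolyhedron I) F ∧
    d = Module.finrank ℝ (affineSpan ℝ F).direction}

/-- The integral closure of a monomial ideal: the ideal generated by the monomials whose
exponent vectors lie in the Newton polyhedron. -/
def intCl {K : Type*} [Field K] {n : ℕ} (L : Ideal (MvPolynomial (Fin n) K)) :
    Ideal (MvPolynomial (Fin n) K) :=
  Ideal.span {f | ∃ b : Fin n →₀ ℕ, expVec b ∈ newtonPolyhedron L ∧ f = monomial b (1 : K)}

/-!
Put `P = conv(I)` and `c = c(I)`. A supporting functional with positive coordinates cuts a compact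
face out of `P`. Minimising a convex sum of exponentials over `P` finds, for `q ∈ P` and `ε > 0`, a
point `p ∈ P` with all `p i ≤ q i + ε` at which the gradient is such a functional, so by
Krein–Milman and Carathéodory `p` is a convex combination of at most `c + 1` extreme points. There
are finitely many extreme points, hence letting `ε → 0` shows that `q` itself dominates such a
combination.

If `k ≥ c`, one of the at most `k + 1` weights is at least `1 / (k + 1)`, so an integral point
`(k + 1) q` of `conv(I ^ (k + 1))` dominates `v + k r` with `v` an extreme point and `r ∈ P`.
Splitting off the monomial with exponent `v` shows that the integral closure of `I ^ (k + 1)` is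
contained in `J` times that of `I ^ k`; induct on `k`.
-/

section ConvexGeometry

lemma extremePoints_add_Ici_zero_subset {E : Type*} [AddCommGroup E] [PartialOrder E]
    [IsOrderedAddMonoid E] [Module ℝ E] (s : Set E) :
    (s + Set.Ici 0).extremePoints ℝ ⊆ s.extremePoints ℝ := by
  intro x hx
  have hs : s ⊆ s + Set.Ici 0 := Set.subset_add_left s (Set.mem_Ici.2 le_rfl)
  obtain ⟨m, hm, d, hd, rfl⟩ := Set.mem_add.1 (extremePoints_subset hx)
  have hmid : m + d ∈ openSegment ℝ m (m + (d + d)) :=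
    ⟨1 / 2, 1 / 2, by norm_num, by norm_num, by norm_num, by module⟩
  have hmd : m = m + d :=
    hx.2 (hs hm) (Set.add_mem_add hm (add_nonneg hd hd)) hmid
  rw [← hmd] at hx ⊢
  exact inter_extremePoints_subset_extremePoints_of_subset hs ⟨hm, hx⟩

lemma exists_finset_extremePoints_mem_convexHull {E : Type*} [NormedAddCommGroup E]
    [NormedSpace ℝ E] [FiniteDimensional ℝ E] {s : Set E} (hs : IsCompact s) (hconv : Convex ℝ s)
    (hfin : (s.extremePoints ℝ).Finite) {p : E} (hp : p ∈ s) :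
    ∃ t : Finset E, ↑t ⊆ s.extremePoints ℝ ∧
      t.card ≤ Module.finrank ℝ (affineSpan ℝ s).direction + 1 ∧ p ∈ convexHull ℝ (t : Set E) := by
  have hKM : convexHull ℝ (s.extremePoints ℝ) = s :=
    (hfin.isClosed_convexHull (𝕜 := ℝ)).closure_eq.symm.trans
      (closure_convexHull_extremePoints hs hconv)
  rw [← hKM, convexHull_eq_union] at hp
  simp only [Set.mem_iUnion] at hp
  obtain ⟨t, hts, hind, hpt⟩ := hp
  refine ⟨t, hts, ?_, hpt⟩
  calc t.card ≤ Module.finrank ℝ (vectorSpan ℝ (Set.range ((↑) : t → E))) + 1 := by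
        simpa only [Fintype.card_coe] using hind.card_le_finrank_succ
    _ ≤ Module.finrank ℝ (affineSpan ℝ s).direction + 1 := by
        rw [direction_affineSpan]
        gcongr
        exact Submodule.finrank_mono <| vectorSpan_mono ℝ <|
          Subtype.range_coe.subset.trans (hts.trans extremePoints_subset)

lemma sum_smul_mem_smul_convexHull {E : Type*} [AddCommGroup E] [Module ℝ E] {t : Finset E}
    (ht : t.Nonempty) {c : E → ℝ} (hc : ∀ x ∈ t, 0 ≤ c x) :
    ∑ x ∈ t, c x • x ∈ (∑ x ∈ t, c x) • convexHull ℝ (t : Set E) := by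
  rcases (Finset.sum_nonneg hc).eq_or_lt with hsum | hsum
  · have hzero : ∀ x ∈ t, c x = 0 := (Finset.sum_eq_zero_iff_of_nonneg hc).1 hsum.symm
    have hhull : (convexHull ℝ (t : Set E)).Nonempty := (Finset.coe_nonempty.2 ht).convexHull
    rw [← hsum, Set.zero_smul_set hhull,
      Finset.sum_eq_zero fun x hx => by rw [hzero x hx, zero_smul]]
    rfl
  · refine ⟨t.centerMass c id, t.centerMass_mem_convexHull hc hsum fun x hx => hx, ?_⟩
    simp only [Finset.centerMass, id_eq, smul_inv_smul₀ hsum.ne']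

lemma exists_smul_eq_add_smul_of_card_le {E : Type*} [AddCommGroup E] [Module ℝ E] {t : Finset E}
    {k : ℕ} (hcard : t.card ≤ k + 1) {p : E} (hp : p ∈ convexHull ℝ (t : Set E)) :
    ∃ v ∈ t, ∃ r ∈ convexHull ℝ (t : Set E), ((k : ℝ) + 1) • p = v + (k : ℝ) • r := by
  have ht : t.Nonempty := Finset.coe_nonempty.1 (convexHull_nonempty_iff.1 ⟨p, hp⟩)
  obtain ⟨w, hw, hsum, rfl⟩ := Finset.mem_convexHull'.1 hp
  obtain ⟨v, hv, hwv⟩ : ∃ v ∈ t, 1 ≤ ((k : ℝ) + 1) * w v := by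
    refine Finset.exists_le_of_sum_le ht ?_
    rw [← Finset.mul_sum, hsum, Finset.sum_const, nsmul_eq_mul, mul_one, mul_one]
    exact_mod_cast hcard
  let c : E → ℝ := fun x => (k + 1) * w x - if x = v then 1 else 0
  have hc : ∀ x ∈ t, 0 ≤ c x := by
    intro x hx
    rcases eq_or_ne x v with rfl | hxv
    · simpa [c] using hwv
    · simpa [c, hxv] using mul_nonneg k.cast_add_one_pos.le (hw x hx)
  have hcsum : ∑ x ∈ t, c x = k := by
    simp [c, Finset.sum_sub_distrib, ← Finset.mul_sum, hsum, hv]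
  have hcsmul : ∑ x ∈ t, c x • x = ((k : ℝ) + 1) • ∑ x ∈ t, w x • x - v := by
    simp [c, sub_smul, mul_smul, Finset.sum_sub_distrib, ← Finset.smul_sum, hv]
  obtain ⟨r, hr, hrc⟩ := sum_smul_mem_smul_convexHull ht hc
  refine ⟨v, hv, r, hr, ?_⟩
  have hkr : (k : ℝ) • r = ∑ x ∈ t, c x • x := by rw [← hcsum]; exact hrc
  rw [hkr, hcsmul, add_sub_cancel]

end ConvexGeometry

section CompactFaces

variable {n : ℕ} {C F : Set (Fin n → ℝ)} {u p q : Fin n → ℝ} {c : ℝ}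

lemma continuous_dotR (u : Fin n → ℝ) : Continuous (dotR u) := by
  unfold dotR
  fun_prop

lemma dotR_self_pos (hu : u ≠ 0) : 0 < dotR u u :=
  (Finset.sum_nonneg fun i _ => mul_self_nonneg (u i)).lt_of_ne' (dotProduct_self_eq_zero.not.2 hu)

lemma IsSupp.isExposed (h : IsSupp C u c) : IsExposed ℝ C {v ∈ C | dotR u v = c} := by
  intro _
  refine ⟨-LinearMap.toContinuousLinearMap (dotProductBilin ℝ ℝ u), Set.ext fun v =>
    and_congr_right fun hv => ?_⟩
  obtain ⟨hle, w, hw, hwc⟩ := h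
  change dotR u v = c ↔ ∀ y ∈ C, -dotR u y ≤ -dotR u v
  simp only [neg_le_neg_iff]
  exact ⟨fun hvc y hy => hvc.trans_le (hle y hy), fun hmin => (hwc ▸ hmin w hw).antisymm (hle v hv)⟩

lemma IsCompactFace.isExposed (hF : IsCompactFace C F) : IsExposed ℝ C F := by
  obtain ⟨⟨u, c, -, hsupp, rfl, -⟩, -⟩ := hF
  exact hsupp.isExposed

lemma isCompact_inter_dotR_eq (hC : IsClosed C) (hbdd : BddBelow C) (hu : ∀ i, 0 < u i) (c : ℝ) :
    IsCompact {v ∈ C | dotR u v = c} := by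
  obtain ⟨b, hb⟩ := hbdd
  refine (isCompact_Icc (a := b) (b := fun i => b i + (c - dotR u b) / u i)).of_isClosed_subset
    (hC.inter (isClosed_singleton.preimage (continuous_dotR u))) ?_
  rintro v ⟨hv, hvc⟩
  refine ⟨hb hv, fun i => ?_⟩
  rw [← sub_le_iff_le_add', le_div_iff₀' (hu i)]
  calc u i * (v i - b i) ≤ ∑ j, u j * (v j - b j) :=
        Finset.single_le_sum (f := fun j => u j * (v j - b j))
          (fun j _ => mul_nonneg (hu j).le (sub_nonneg.2 (hb hv j))) (Finset.mem_univ i)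
    _ = c - dotR u b := by
        simp only [← hvc, dotR, mul_sub, Finset.sum_sub_distrib]

lemma IsSupp.isCompactFace (hn : 0 < n) (hC : IsClosed C) (hbdd : BddBelow C) (hup : IsUpperSet C)
    (hu : ∀ i, 0 < u i) (h : IsSupp C u c) : IsCompactFace C {v ∈ C | dotR u v = c} := by
  have hu0 : u ≠ 0 := fun h0 => (hu ⟨0, hn⟩).ne' (congrFun h0 _)
  refine ⟨⟨u, c, hu0, h, rfl, fun hall => ?_⟩, isCompact_inter_dotR_eq hC hbdd hu c⟩
  obtain ⟨p, hp, hpc⟩ := h.2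
  have hpu : p + u ∈ C := hup (le_add_of_nonneg_right fun i => (hu i).le) hp
  rw [← hall] at hpu
  have hadd : dotR u (p + u) = dotR u p + dotR u u := dotProduct_add u p u
  linarith [hpu.2, dotR_self_pos hu0]

lemma isSupp_of_isMinOn_sum (hC : Convex ℝ C) (hp : p ∈ C) {f : Fin n → ℝ → ℝ} {f' : Fin n → ℝ}
    (hf : ∀ i, HasDerivAt (f i) (f' i) (p i)) (hmin : IsMinOn (fun v => ∑ i, f i (v i)) C p) :
    IsSupp C f' (dotR f' p) := by
  refine ⟨fun v hv => ?_, p, hp, rfl⟩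
  have hderiv : HasFDerivAt (fun v : Fin n → ℝ => ∑ i, f i (v i))
      (∑ i, f' i • ContinuousLinearMap.proj i) p :=
    HasFDerivAt.fun_sum fun i _ => (hf i).comp_hasFDerivAt p
      (ContinuousLinearMap.proj (R := ℝ) (φ := fun _ : Fin n => ℝ) i).hasFDerivAt
  have hnonneg := hmin.localize.hasFDerivWithinAt_nonneg hderiv.hasFDerivWithinAt
    (sub_mem_posTangentConeAt_of_segment_subset (hC.segment_subset hp hv))
  simpa [dotR, mul_sub] using hnonneg

/-- The objective is `n` at `q`, but exceeds `exp (n + 1)` at any `v` with some `v i > q i + ε`. -/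
lemma exists_le_add_isMinOn_sum_exp (hC : IsClosed C) (hbdd : BddBelow C) (hq : q ∈ C)
    {ε : ℝ} (hε : 0 < ε) :
    ∃ p ∈ C, p ≤ q + Function.const _ ε ∧
      IsMinOn (fun v => ∑ i, Real.exp ((n + 1) / ε * (v i - q i))) C p := by
  set h : (Fin n → ℝ) → ℝ := fun v => ∑ i, Real.exp ((n + 1) / ε * (v i - q i)) with h_def
  have hle : ∀ v, h v ≤ h q → v ≤ q + Function.const _ ε := by
    intro v hv i
    by_contra! hlt
    have hexp : (n : ℝ) + 1 ≤ (n + 1) / ε * (v i - q i) := by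
      rw [div_mul_eq_mul_div, le_div_iff₀ hε]
      gcongr
      exact (lt_sub_iff_add_lt'.2 hlt).le
    have : (n : ℝ) + 1 < n := calc
      (n : ℝ) + 1 < Real.exp (n + 1) := by linarith [Real.add_one_le_exp ((n : ℝ) + 1)]
      _ ≤ Real.exp ((n + 1) / ε * (v i - q i)) := Real.exp_le_exp.2 hexp
      _ ≤ h v := Finset.single_le_sum (f := fun i => Real.exp ((n + 1) / ε * (v i - q i)))
          (fun j _ => (Real.exp_pos _).le) (Finset.mem_univ i)
      _ ≤ h q := hv
      _ = n := by simp [h_def]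
    linarith
  obtain ⟨b, hb⟩ := hbdd
  have hcont : Continuous h := by fun_prop
  obtain ⟨p, hp, hmin⟩ := hcont.continuousOn.exists_isMinOn' hC hq <| by
    rw [Filter.eventually_inf_principal]
    filter_upwards [(isCompact_Icc (a := b) (b := q + Function.const _ ε)).compl_mem_cocompact]
      with v hv hvC
    exact le_of_not_ge fun hvq => hv ⟨hb hvC, hle v hvq⟩
  exact ⟨p, hp, hle p (hmin hq), hmin⟩

lemma exists_le_add_isSupp_pos (hC : IsClosed C) (hconv : Convex ℝ C) (hbdd : BddBelow C)
    (hq : q ∈ C) {ε : ℝ} (hε : 0 < ε) :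
    ∃ p ∈ C, p ≤ q + Function.const _ ε ∧ ∃ u, (∀ i, 0 < u i) ∧ IsSupp C u (dotR u p) := by
  obtain ⟨p, hp, hpq, hmin⟩ := exists_le_add_isMinOn_sum_exp hC hbdd hq hε
  have hderiv (i : Fin n) : HasDerivAt (fun x => Real.exp ((n + 1) / ε * (x - q i)))
      (Real.exp ((n + 1) / ε * (p i - q i)) * ((n + 1) / ε)) (p i) := by
    simpa using (((hasDerivAt_id (p i)).sub_const (q i)).const_mul ((n + 1) / ε)).exp
  exact ⟨p, hp, hpq, _, fun i => by positivity, isSupp_of_isMinOn_sum hconv hp hderiv hmin⟩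

lemma IsCompactFace.exists_finset_extremePoints (hconv : Convex ℝ C)
    (hfin : (C.extremePoints ℝ).Finite) (hF : IsCompactFace C F) (hp : p ∈ F) :
    ∃ t : Finset (Fin n → ℝ), ↑t ⊆ C.extremePoints ℝ ∧
      t.card ≤ Module.finrank ℝ (affineSpan ℝ F).direction + 1 ∧
      p ∈ convexHull ℝ (t : Set (Fin n → ℝ)) := by
  have hext := hF.isExposed.isExtreme.extremePoints_subset_extremePoints
  obtain ⟨t, htF, hcard, hpt⟩ := exists_finset_extremePoints_mem_convexHull hF.2
    (hF.isExposed.convex hconv) (hfin.subset hext) hp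
  exact ⟨t, htF.trans hext, hcard, hpt⟩

lemma exists_finset_extremePoints_le (hC : IsClosed C) (hconv : Convex ℝ C) (hbdd : BddBelow C)
    (hup : IsUpperSet C) (hfin : (C.extremePoints ℝ).Finite) {d : ℕ}
    (hd : ∀ F, IsCompactFace C F → Module.finrank ℝ (affineSpan ℝ F).direction ≤ d)
    (hq : q ∈ C) :
    ∃ t : Finset (Fin n → ℝ), ↑t ⊆ C.extremePoints ℝ ∧ t.card ≤ d + 1 ∧
      ∃ p ∈ convexHull ℝ (t : Set (Fin n → ℝ)), p ≤ q := by
  rcases n.eq_zero_or_pos with rfl | hn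
  · exact ⟨{q}, by simpa [Set.extremePoints_eq_self] using hq, by simp, q, by simp⟩
  let T : Finset (Finset (Fin n → ℝ)) := {t ∈ hfin.toFinset.powerset | t.card ≤ d + 1}
  let U : Set (Fin n → ℝ) := ⋃ t ∈ T, convexHull ℝ (t : Set (Fin n → ℝ)) + Set.Ici 0
  have hU : IsClosed U := isClosed_biUnion_finset fun t _ =>
    isClosed_Ici.add_left_of_isCompact (t.finite_toSet.isCompact_convexHull (𝕜 := ℝ))
  have happrox : ∀ ε : ℝ, 0 < ε → q + Function.const _ ε ∈ U := by
    intro ε hε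
    obtain ⟨p, hp, hpq, u, hu, hsupp⟩ := exists_le_add_isSupp_pos hC hconv hbdd hq hε
    have hF := hsupp.isCompactFace hn hC hbdd hup hu
    obtain ⟨t, ht, hcard, hpt⟩ := hF.exists_finset_extremePoints hconv hfin ⟨hp, rfl⟩
    refine Set.mem_biUnion (x := t) ?_
      ⟨p, hpt, _, sub_nonneg.2 hpq, add_sub_cancel p _⟩
    simpa [T, Set.Finite.subset_toFinset] using ⟨ht, hcard.trans (Nat.add_le_add_right (hd _ hF) 1)⟩
  have hlim : Filter.Tendsto (fun ε : ℝ => q + Function.const (Fin n) ε)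
      (nhdsWithin 0 (Set.Ioi 0)) (nhds q) := by
    have : Continuous fun ε : ℝ => q + Function.const (Fin n) ε := by fun_prop
    simpa using (this.tendsto 0).mono_left nhdsWithin_le_nhds
  have hqU : q ∈ U := hU.mem_of_tendsto hlim (eventually_mem_nhdsWithin.mono happrox)
  obtain ⟨t, ht, p, hp, e, he, rfl⟩ := Set.mem_iUnion₂.1 hqU
  obtain ⟨htC, hcard⟩ : ↑t ⊆ C.extremePoints ℝ ∧ t.card ≤ d + 1 := by
    simpa [T, Set.Finite.subset_toFinset] using ht
  exact ⟨t, htC, hcard, p, hp, le_add_of_nonneg_right he⟩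

end CompactFaces

section NewtonPolyhedron

variable {K : Type*} [Field K] {n : ℕ}

lemma expVec_add (a b : Fin n →₀ ℕ) : expVec (a + b) = expVec a + expVec b := by
  ext i
  simp [expVec]

lemma expVec_le_expVec {a b : Fin n →₀ ℕ} : expVec a ≤ expVec b ↔ a ≤ b := by
  simp [expVec, Pi.le_def, Finsupp.le_def]

lemma expVec_injective : Function.Injective (expVec (n := n)) := fun _ _ h =>
  le_antisymm (expVec_le_expVec.1 h.le) (expVec_le_expVec.1 h.ge)

lemma convexHull_range_natCast : convexHull ℝ (Set.range ((↑) : ℕ → ℝ)) = Set.Ici 0 := by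
  refine (convexHull_min (Set.range_subset_iff.2 fun m => Set.mem_Ici.2 m.cast_nonneg)
    (convex_Ici 0)).antisymm fun x hx => ?_
  obtain ⟨N, hN⟩ := exists_nat_ge x
  have hseg := segment_subset_convexHull (𝕜 := ℝ) (s := Set.range ((↑) : ℕ → ℝ)) ⟨0, rfl⟩ ⟨N, rfl⟩
  rw [Nat.cast_zero, segment_eq_Icc N.cast_nonneg] at hseg
  exact hseg ⟨hx, hN⟩

lemma range_expVec :
    Set.range (expVec (n := n)) = Set.univ.pi fun _ => Set.range ((↑) : ℕ → ℝ) := by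
  ext v
  rw [Set.mem_univ_pi]
  constructor
  · rintro ⟨a, rfl⟩ i
    exact ⟨a i, rfl⟩
  · intro h
    choose a ha using h
    exact ⟨Finsupp.equivFunOnFinite.symm a, funext ha⟩

lemma convexHull_range_expVec : convexHull ℝ (Set.range (expVec (n := n))) = Set.Ici 0 := by
  simp only [range_expVec, convexHull_pi, convexHull_range_natCast, Set.pi_univ_Ici]
  rfl

variable (K) in
/-- The monomial ideal of `K[x_1, …, x_n]` generated by the monomials with exponents in `S`;
`IsMonomialIdeal I` unfolds to `∃ S, I = monomialSpan K S`. -/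
def monomialSpan (S : Set (Fin n →₀ ℕ)) : Ideal (MvPolynomial (Fin n) K) :=
  Ideal.span ((fun a => monomial a (1 : K)) '' S)

lemma monomial_mem_monomialSpan {S : Set (Fin n →₀ ℕ)} {a : Fin n →₀ ℕ} :
    monomial a (1 : K) ∈ monomialSpan K S ↔ ∃ s ∈ S, s ≤ a := by
  rw [monomialSpan, mem_ideal_span_monomial_image]
  simp [support_monomial]

lemma monomialSpan_mul (S T : Set (Fin n →₀ ℕ)) :
    monomialSpan K S * monomialSpan K T = monomialSpan K (S + T) := by
  simp only [monomialSpan, Ideal.span_mul_span', ← Set.image2_mul, ← Set.image2_add,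
    Set.image2_image_left, Set.image2_image_right, Set.image_image2, monomial_mul, mul_one]

lemma monomialSpan_le {S : Set (Fin n →₀ ℕ)} {I : Ideal (MvPolynomial (Fin n) K)} :
    monomialSpan K S ≤ I ↔ ∀ a ∈ S, monomial a (1 : K) ∈ I := by
  rw [monomialSpan, Ideal.span_le, Set.image_subset_iff]
  rfl

lemma exists_finite_monomialSpan_eq (S : Set (Fin n →₀ ℕ)) :
    ∃ T ⊆ S, T.Finite ∧ monomialSpan K S = monomialSpan K T := by
  obtain ⟨G, hGS, hspan⟩ := (Submodule.fg_span_iff_fg_span_finset_subset _).1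
    (IsNoetherian.noetherian (monomialSpan K S))
  obtain ⟨T, hTS, rfl⟩ := Finset.subset_set_image_iff.1 hGS
  rw [Finset.coe_image] at hspan
  exact ⟨T, hTS, T.finite_toSet, hspan⟩

lemma newtonPolyhedron_monomialSpan (S : Set (Fin n →₀ ℕ)) :
    newtonPolyhedron (monomialSpan K S) = convexHull ℝ (expVec '' S) + Set.Ici 0 := by
  rw [← convexHull_range_expVec, ← convexHull_add, newtonPolyhedron]
  congr 1
  ext v
  simp only [monomial_mem_monomialSpan, Set.mem_add, Set.exists_mem_image, Set.exists_range_iff,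
    ← expVec_add]
  constructor
  · rintro ⟨a, ⟨s, hs, hsa⟩, rfl⟩
    exact ⟨s, hs, a - s, by rw [add_tsub_cancel_of_le hsa]⟩
  · rintro ⟨s, hs, d, rfl⟩
    exact ⟨s + d, ⟨s, hs, le_self_add⟩, rfl⟩

lemma convex_newtonPolyhedron (I : Ideal (MvPolynomial (Fin n) K)) :
    Convex ℝ (newtonPolyhedron I) :=
  convex_convexHull ℝ _

lemma expVec_mem_newtonPolyhedron {I : Ideal (MvPolynomial (Fin n) K)} {a : Fin n →₀ ℕ}
    (ha : monomial a (1 : K) ∈ I) : expVec a ∈ newtonPolyhedron I :=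
  subset_convexHull ℝ _ ⟨a, ha, rfl⟩

lemma newtonPolyhedron_subset_Ici (I : Ideal (MvPolynomial (Fin n) K)) :
    newtonPolyhedron I ⊆ Set.Ici 0 := by
  rw [← convexHull_range_expVec]
  refine convexHull_mono ?_
  rintro _ ⟨a, -, rfl⟩
  exact ⟨a, rfl⟩

lemma exists_monomial_mem_of_mem_extremePoints {I : Ideal (MvPolynomial (Fin n) K)}
    {v : Fin n → ℝ} (hv : v ∈ (newtonPolyhedron I).extremePoints ℝ) :
    ∃ a : Fin n →₀ ℕ, monomial a (1 : K) ∈ I ∧ v = expVec a := by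
  have hgen : v ∈ {v | ∃ a : Fin n →₀ ℕ, monomial a (1 : K) ∈ I ∧ v = expVec a} :=
    extremePoints_convexHull_subset hv
  exact hgen

lemma finrank_le_maxCompactFaceDim (I : Ideal (MvPolynomial (Fin n) K)) {F : Set (Fin n → ℝ)}
    (hF : IsCompactFace (newtonPolyhedron I) F) :
    Module.finrank ℝ (affineSpan ℝ F).direction ≤ maxCompactFaceDim I := by
  refine le_csSup ⟨n, ?_⟩ ⟨F, hF, rfl⟩
  rintro _ ⟨F', -, rfl⟩
  simpa using Submodule.finrank_le (affineSpan ℝ F').direction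

namespace IsMonomialIdeal

variable {I J : Ideal (MvPolynomial (Fin n) K)}

protected lemma mul (hI : IsMonomialIdeal I) (hJ : IsMonomialIdeal J) :
    IsMonomialIdeal (I * J) := by
  obtain ⟨S, rfl⟩ := hI
  obtain ⟨T, rfl⟩ := hJ
  exact ⟨S + T, monomialSpan_mul S T⟩

protected lemma pow (hI : IsMonomialIdeal I) (k : ℕ) : IsMonomialIdeal (I ^ k) := by
  induction k with
  | zero => exact ⟨{0}, by simp [Ideal.one_eq_top, ← C_apply]⟩
  | succ k ih => exact pow_succ I k ▸ ih.mul hI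

lemma exists_newtonPolyhedron_eq (hI : IsMonomialIdeal I) :
    ∃ V : Set (Fin n → ℝ), V.Finite ∧ newtonPolyhedron I = convexHull ℝ V + Set.Ici 0 := by
  obtain ⟨S, rfl⟩ := hI
  obtain ⟨T, -, hT, hST⟩ := exists_finite_monomialSpan_eq (K := K) S
  exact ⟨expVec '' T, hT.image _, (congrArg newtonPolyhedron hST).trans
    (newtonPolyhedron_monomialSpan T)⟩

lemma isUpperSet_newtonPolyhedron (hI : IsMonomialIdeal I) : IsUpperSet (newtonPolyhedron I) := by
  obtain ⟨V, -, hV⟩ := hI.exists_newtonPolyhedron_eq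
  exact hV ▸ (isUpperSet_Ici 0).add_left

lemma isClosed_newtonPolyhedron (hI : IsMonomialIdeal I) : IsClosed (newtonPolyhedron I) := by
  obtain ⟨V, hfin, hV⟩ := hI.exists_newtonPolyhedron_eq
  exact hV ▸ isClosed_Ici.add_left_of_isCompact (hfin.isCompact_convexHull (𝕜 := ℝ))

lemma finite_extremePoints_newtonPolyhedron (hI : IsMonomialIdeal I) :
    ((newtonPolyhedron I).extremePoints ℝ).Finite := by
  obtain ⟨V, hfin, hV⟩ := hI.exists_newtonPolyhedron_eq
  rw [hV]
  exact hfin.subset ((extremePoints_add_Ici_zero_subset _).trans extremePoints_convexHull_subset)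

lemma newtonPolyhedron_mul (hI : IsMonomialIdeal I) (hJ : IsMonomialIdeal J) :
    newtonPolyhedron (I * J) = newtonPolyhedron I + newtonPolyhedron J := by
  have hIci : (Set.Ici 0 : Set (Fin n → ℝ)) + Set.Ici 0 = Set.Ici 0 :=
    (Set.add_subset_iff.2 fun _ hx _ hy => add_nonneg hx hy).antisymm
      (Set.subset_add_left _ (Set.mem_Ici.2 le_rfl))
  obtain ⟨S, rfl⟩ := hI
  obtain ⟨T, rfl⟩ := hJ
  change newtonPolyhedron (monomialSpan K S * monomialSpan K T) =
    newtonPolyhedron (monomialSpan K S) + newtonPolyhedron (monomialSpan K T)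
  have himage : (expVec '' (S + T) : Set (Fin n → ℝ)) = expVec '' S + expVec '' T :=
    Set.image_image2_distrib expVec_add
  rw [monomialSpan_mul, newtonPolyhedron_monomialSpan, newtonPolyhedron_monomialSpan,
    newtonPolyhedron_monomialSpan, himage, convexHull_add, add_add_add_comm, hIci]

lemma newtonPolyhedron_pow_succ (hI : IsMonomialIdeal I) (k : ℕ) :
    newtonPolyhedron (I ^ (k + 1)) = ((k : ℝ) + 1) • newtonPolyhedron I := by
  induction k with
  | zero => simp
  | succ k ih =>
    rw [pow_succ, (hI.pow _).newtonPolyhedron_mul hI, ih, Nat.cast_succ,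
      (convex_newtonPolyhedron I).add_smul k.cast_add_one_pos.le zero_le_one, one_smul]

lemma smul_mem_newtonPolyhedron_pow (hI : IsMonomialIdeal I) (k : ℕ) {q : Fin n → ℝ}
    (hq : q ∈ newtonPolyhedron I) : (k : ℝ) • q ∈ newtonPolyhedron (I ^ k) := by
  cases k with
  | zero =>
    have hzero : expVec (0 : Fin n →₀ ℕ) ∈ newtonPolyhedron (I ^ 0) :=
      expVec_mem_newtonPolyhedron (by simp)
    convert hzero
    simp [funext_iff, expVec]
  | succ k =>
    rw [hI.newtonPolyhedron_pow_succ, Nat.cast_succ]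
    exact Set.smul_mem_smul_set hq

end IsMonomialIdeal

end NewtonPolyhedron

section IntegralClosure

variable {K : Type*} [Field K] {n : ℕ} {I : Ideal (MvPolynomial (Fin n) K)}

/-- The minimal monomial reduction ideal of `I`, generated by the monomials whose exponents are
the extreme points of the Newton polyhedron. -/
def minimalMonomialReduction (I : Ideal (MvPolynomial (Fin n) K)) :
    Ideal (MvPolynomial (Fin n) K) :=
  Ideal.span {f | ∃ a : Fin n →₀ ℕ,
    expVec a ∈ Set.extremePoints ℝ (newtonPolyhedron I) ∧ f = monomial a (1 : K)}

lemma minimalMonomialReduction_le (I : Ideal (MvPolynomial (Fin n) K)) :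
    minimalMonomialReduction I ≤ I := by
  refine Ideal.span_le.2 ?_
  rintro _ ⟨a, ha, rfl⟩
  obtain ⟨b, hb, hab⟩ := exists_monomial_mem_of_mem_extremePoints ha
  rwa [expVec_injective hab]

lemma IsMonomialIdeal.le_intCl (hI : IsMonomialIdeal I) : I ≤ intCl I := by
  obtain ⟨S, hS⟩ := hI
  conv_lhs => rw [hS]
  refine monomialSpan_le.2 fun a ha => Ideal.subset_span ⟨a, expVec_mem_newtonPolyhedron ?_, rfl⟩
  exact hS ▸ Ideal.subset_span ⟨a, ha, rfl⟩

lemma exists_extremePoint_add_of_mem_newtonPolyhedron_pow (hI : IsMonomialIdeal I) {k : ℕ}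
    (hk : maxCompactFaceDim I ≤ k) {b : Fin n →₀ ℕ}
    (hb : expVec b ∈ newtonPolyhedron (I ^ (k + 1))) :
    ∃ a b' : Fin n →₀ ℕ, expVec a ∈ (newtonPolyhedron I).extremePoints ℝ ∧
      expVec b' ∈ newtonPolyhedron (I ^ k) ∧ a + b' = b := by
  rw [hI.newtonPolyhedron_pow_succ] at hb
  obtain ⟨q, hq, hqb : ((k : ℝ) + 1) • q = expVec b⟩ := hb
  obtain ⟨t, ht, hcard, p, hp, hpq⟩ := exists_finset_extremePoints_le hI.isClosed_newtonPolyhedron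
    (convex_newtonPolyhedron I) ⟨0, newtonPolyhedron_subset_Ici I⟩ hI.isUpperSet_newtonPolyhedron
    hI.finite_extremePoints_newtonPolyhedron (fun _ => finrank_le_maxCompactFaceDim I) hq
  obtain ⟨v, hv, r, hr, hvr⟩ := exists_smul_eq_add_smul_of_card_le
    (hcard.trans (Nat.add_le_add_right hk 1)) hp
  obtain ⟨a, -, rfl⟩ := exists_monomial_mem_of_mem_extremePoints (ht hv)
  have hrI : r ∈ newtonPolyhedron I :=
    convexHull_min (ht.trans extremePoints_subset) (convex_newtonPolyhedron I) hr
  have hle : expVec a + (k : ℝ) • r ≤ expVec b := by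
    rw [← hvr, ← hqb]
    exact smul_le_smul_of_nonneg_left hpq k.cast_add_one_pos.le
  have hab : a ≤ b := expVec_le_expVec.1 <| le_trans
    (le_add_of_nonneg_right (smul_nonneg k.cast_nonneg (newtonPolyhedron_subset_Ici I hrI))) hle
  obtain ⟨b', rfl⟩ := exists_add_of_le hab
  rw [expVec_add, add_le_add_iff_left] at hle
  exact ⟨a, b', ht hv,
    (hI.pow k).isUpperSet_newtonPolyhedron hle (hI.smul_mem_newtonPolyhedron_pow k hrI), rfl⟩

lemma intCl_pow_succ_le (hI : IsMonomialIdeal I) {k : ℕ} (hk : maxCompactFaceDim I ≤ k) :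
    intCl (I ^ (k + 1)) ≤ minimalMonomialReduction I * intCl (I ^ k) := by
  refine Ideal.span_le.2 ?_
  rintro _ ⟨_, hb, rfl⟩
  obtain ⟨a, b, ha, hb', rfl⟩ := exists_extremePoint_add_of_mem_newtonPolyhedron_pow hI hk hb
  rw [← mul_one (1 : K), ← monomial_mul]
  exact Ideal.mul_mem_mul (Ideal.subset_span ⟨a, ha, rfl⟩) (Ideal.subset_span ⟨b, hb', rfl⟩)

lemma intCl_pow_le_of_le (hI : IsMonomialIdeal I)
    (hc : intCl (I ^ maxCompactFaceDim I) ≤ I ^ maxCompactFaceDim I) {k : ℕ}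
    (hk : maxCompactFaceDim I ≤ k) : intCl (I ^ k) ≤ I ^ k := by
  induction k, hk using Nat.le_induction with
  | base => exact hc
  | succ k hk ih =>
    calc intCl (I ^ (k + 1)) ≤ minimalMonomialReduction I * intCl (I ^ k) := intCl_pow_succ_le hI hk
      _ ≤ I * I ^ k := Ideal.mul_mono (minimalMonomialReduction_le I) ih
      _ = I ^ (k + 1) := (pow_succ' I k).symm

end IntegralClosure

theorem stmt19 {K : Type*} [Field K] {n : ℕ} (I J : Ideal (MvPolynomial (Fin n) K))
    (hI : IsMonomialIdeal I) (hne : I ≠ ⊥) (hproper : I ≠ ⊤)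
    (hJ : J = Ideal.span {f | ∃ a : Fin n →₀ ℕ,
        expVec a ∈ Set.extremePoints ℝ (newtonPolyhedron I) ∧ f = monomial a (1 : K)})
    (ℓ : ℕ) (hℓ : ℓ = maxCompactFaceDim I + 1)
    (hcl : ∀ a : ℕ, 1 ≤ a → a ≤ ℓ - 1 → I ^ a = intCl (I ^ a)) :
    I ^ ℓ = J * I ^ (ℓ - 1) ∧ ∀ a : ℕ, 1 ≤ a → I ^ a = intCl (I ^ a) := by
  change J = minimalMonomialReduction I at hJ
  subst hJ hℓ
  rw [Nat.add_sub_cancel] at hcl ⊢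
  set c := maxCompactFaceDim I
  have hc : intCl (I ^ c) ≤ I ^ c := by
    rcases c.eq_zero_or_pos with h | h
    · simp [h, Ideal.one_eq_top]
    · exact (hcl c h le_rfl).ge
  refine ⟨le_antisymm ?_ ?_, fun a ha => (le_total a c).elim (hcl a ha) fun hca =>
    (hI.pow a).le_intCl.antisymm (intCl_pow_le_of_le hI hc hca)⟩
  · calc I ^ (c + 1) ≤ intCl (I ^ (c + 1)) := (hI.pow _).le_intCl
      _ ≤ minimalMonomialReduction I * intCl (I ^ c) := intCl_pow_succ_le hI le_rfl
      _ ≤ minimalMonomialReduction I * I ^ c := Ideal.mul_mono_right hc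
  · rw [pow_succ']
    exact Ideal.mul_mono_left (minimalMonomialReduction_le I)
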